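/- arXiv:1404.5716 — 5 statements merged into one kernel-verified Lean document; each statement's English description precedes it below -/
import Mathlib

section
/- Let g₁, …, g_n ∈ 𝔽_{q^m} be linearly independent over 𝔽_q, let f be a q-linearized polynomial over 𝔽_{q^m} of q-degree less than k, let c = (f(g₁), …, f(g_n)) and let r = (r₁, …, r_n) ∈ 𝔽_{q^m}^n. If d_R(c, r) = t, then there exists a monic q-linearized polynomial D over 𝔽_{q^m} of q-degree t, namely D = ∏_{β ∈ span_{𝔽_q}(r₁ − c₁, …, r_n − c_n)} (X − β), such that D(r_i) = D(f(g_i)) for all i = 1, …, n. -/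
/-!
The argument rests on the classical fact that the subspace polynomial `∏ β ∈ V, (X - β)` of a
`t`-dimensional `K`-subspace `V` of `L` is `q`-linearized of `q`-degree `t`.

Given `v₁, …, v_t`, a monic linearized polynomial of degree `q ^ t` vanishing at all of them is
built recursively (`exists_linearized_of_list`): if `P` works for `v₂, …, v_t` and `a = P(v₁)`,
then `P ^ q - a ^ (q - 1) P` works for `v₁, …, v_t`. Evaluation of such a polynomial is `K`-linear,
so for a basis `v` of `V` it vanishes on `V`. The subspace polynomial divides it, and both
are monic of degree `|V| = q ^ t`, so they coincide.

Finally `D` is additive and kills `rᵢ - cᵢ`, whence `D(rᵢ) = D(cᵢ)`.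
-/

open Polynomial

/-- A polynomial over `L` is `q`-linearized if every monomial with nonzero coefficient
has degree a power of `q`, i.e. it is of the form `∑ aᵢ X^(q^i)`. -/
def IsLinearized {L : Type*} [Field L] (q : ℕ) (f : L[X]) : Prop :=
  ∀ n : ℕ, f.coeff n ≠ 0 → ∃ i : ℕ, n = q ^ i

/-- The rank distance between `u, v ∈ L^n`: the `K`-dimension of the `K`-span of the
coordinates of `u - v`. -/
noncomputable def rankDist (K : Type*) {L : Type*} [Field K] [Field L] [Algebra K L]
    {n : ℕ} (u v : Fin n → L) : ℕ :=
  Module.finrank K (Submodule.span K (Set.range fun i => u i - v i))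

/-- In characteristic `p` with `q = p ^ e`, the power `P ^ q` is obtained by raising both the
coefficients and the variable of `P` to the power `q`. -/
lemma IsLinearized.pow_card {K L : Type*} [Field K] [Field L] [Algebra K L] [Fintype K]
    {P : L[X]} (hP : IsLinearized (Fintype.card K) P) :
    IsLinearized (Fintype.card K) (P ^ Fintype.card K) := by
  obtain ⟨p, _, e, hp, hcard⟩ := FiniteField.card' K
  have : Fact p.Prime := ⟨hp⟩
  have : CharP L p := charP_of_injective_algebraMap' K p
  have : ExpChar L p := ExpChar.prime hp
  intro n hn
  rw [hcard, ← map_iterateFrobenius_expand p P e, coeff_map,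
    coeff_expand (pow_pos hp.pos _)] at hn
  split_ifs at hn with hdiv
  · obtain ⟨i, hi⟩ := hP (n / p ^ (e : ℕ)) fun h => hn (by rw [h, map_zero])
    refine ⟨i + 1, ?_⟩
    rw [pow_succ, ← hi, hcard, Nat.div_mul_cancel hdiv]
  · exact absurd (map_zero _) hn

/-- The recursion adding one root `v` to a linearized polynomial `P` replaces `P` by
`P ^ q - P(v) ^ (q - 1) P`; if already `P(v) = 0`, this is `P ^ q`. -/
lemma exists_linearized_of_list (K : Type*) {L : Type*} [Field K] [Field L] [Algebra K L]
    [Fintype K] (l : List L) :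
    ∃ (P : L[X]) (φ : L →ₗ[K] L), P.Monic ∧ IsLinearized (Fintype.card K) P ∧
      P.natDegree = Fintype.card K ^ l.length ∧ (∀ x, P.eval x = φ x) ∧ ∀ v ∈ l, φ v = 0 := by
  have hq : 1 < Fintype.card K := Fintype.one_lt_card
  induction l with
  | nil =>
    refine ⟨X, LinearMap.id, monic_X, fun n hn => ⟨0, ?_⟩, by simp, by simp, by simp⟩
    by_contra h
    exact hn (coeff_X_of_ne_one (by simpa using h))
  | cons v l ih =>
    obtain ⟨P, φ, hmon, hlin, hdeg, heval, hzero⟩ := ih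
    have hlt : (C (φ v ^ (Fintype.card K - 1)) * P).natDegree < (P ^ Fintype.card K).natDegree := by
      refine (natDegree_C_mul_le _ _).trans_lt ?_
      rw [hmon.natDegree_pow, hdeg]
      exact lt_mul_of_one_lt_left (by positivity) hq
    refine ⟨P ^ Fintype.card K - C (φ v ^ (Fintype.card K - 1)) * P,
      (FiniteField.frobeniusAlgHom K L).toLinearMap ∘ₗ φ - φ v ^ (Fintype.card K - 1) • φ,
      (hmon.pow _).sub_of_left (degree_lt_degree hlt), fun n hn => ?_, ?_, fun x => ?_,
      fun w hw => ?_⟩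
    · by_cases h : P.coeff n = 0
      · exact hlin.pow_card n (by simpa only [coeff_sub, coeff_C_mul, h, mul_zero, sub_zero] using hn)
      · exact hlin n h
    · rw [natDegree_sub_eq_left_of_natDegree_lt hlt, hmon.natDegree_pow, hdeg, List.length_cons,
        pow_succ']
    · simp [heval]
    · rcases List.mem_cons.1 hw with rfl | hw
      · simp [← pow_succ, Nat.sub_add_cancel hq.le]
      · simp [hzero w hw]

/-- Let `g₁, …, g_n ∈ 𝔽_{q^m}` be linearly independent over `𝔽_q`, `f` a
`q`-linearized polynomial of `q`-degree less than `k`, `c = (f(g₁), …, f(g_n))` and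
`r ∈ 𝔽_{q^m}^n`. If `d_R(c, r) = t`, then `D = ∏_{β ∈ span(r₁−c₁, …, r_n−c_n)} (X − β)`
is a monic `q`-linearized polynomial of `q`-degree `t` with `D(rᵢ) = D(f(gᵢ))` for all `i`. -/
theorem stmt4 (K L : Type*) [Field K] [Field L] [Algebra K L] [Fintype K] [Fintype L]
    (q m : ℕ) (hq : q = Fintype.card K) (hm : Fintype.card L = q ^ m)
    (n k : ℕ) (g : Fin n → L) (hg : LinearIndependent K g)
    (f : L[X]) (hflin : IsLinearized q f) (hfdeg : f.degree < (q ^ k : ℕ))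
    (c r : Fin n → L) (hc : ∀ i, c i = f.eval (g i))
    (t : ℕ) (ht : rankDist K c r = t) :
    ∃ D : L[X],
      D = ∏ β ∈ (Set.toFinite ((Submodule.span K (Set.range fun i => r i - c i) : Submodule K L) : Set L)).toFinset, (X - C β) ∧
      D.Monic ∧ IsLinearized q D ∧ D.natDegree = q ^ t ∧
      ∀ i, D.eval (r i) = D.eval (f.eval (g i)) := by
  subst hq
  set V : Submodule K L := Submodule.span K (Set.range fun i => r i - c i) with hV
  have hfin : Module.finrank K V = t := by
    have hneg : (Set.range fun i => c i - r i) = -Set.range fun i => r i - c i := by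
      rw [← Set.image_neg_eq_neg, ← Set.range_comp]
      exact congrArg Set.range (funext fun i => (neg_sub _ _).symm)
    rw [← ht, rankDist, hneg, Submodule.span_neg]
  have hcardV : (Set.toFinite (V : Set L)).toFinset.card = Fintype.card K ^ t := by
    rw [← Set.ncard_eq_toFinset_card, ← hfin, ← Nat.card_eq_fintype_card,
      ← Module.natCard_eq_pow_finrank (K := K) (V := V)]
    rfl
  have hDmon : (∏ β ∈ (Set.toFinite (V : Set L)).toFinset, (X - C β)).Monic :=
    monic_prod_X_sub_C _ _
  have hDdeg : (∏ β ∈ (Set.toFinite (V : Set L)).toFinset, (X - C β)).natDegree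
      = Fintype.card K ^ t := by
    rw [natDegree_finsetProd_X_sub_C_eq_card, hcardV]
  let b := Module.finBasis K V
  obtain ⟨P, φ, hPmon, hPlin, hPdeg, heval, hzero⟩ :=
    exists_linearized_of_list K (List.ofFn fun i => (b i : L))
  rw [List.length_ofFn, hfin] at hPdeg
  have hker : ∀ x ∈ V, φ x = 0 := by
    have h : φ ∘ₗ V.subtype = 0 := b.ext fun i => hzero _ (by simp [List.mem_ofFn])
    exact fun x hx => LinearMap.congr_fun h ⟨x, hx⟩
  have hdvd : (∏ β ∈ (Set.toFinite (V : Set L)).toFinset, (X - C β)) ∣ P := by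
    refine Finset.prod_dvd_of_coprime
      (fun x _ y _ hxy => pairwise_coprime_X_sub_C Function.injective_id hxy) fun β hβ => ?_
    rw [dvd_iff_isRoot, IsRoot, heval]
    exact hker β (by simpa using hβ)
  have hPD : P = ∏ β ∈ (Set.toFinite (V : Set L)).toFinset, (X - C β) :=
    eq_of_monic_of_dvd_of_natDegree_le hDmon hPmon hdvd (by rw [hPdeg, hDdeg])
  refine ⟨P, hPD, hPmon, hPlin, hPdeg, fun i => ?_⟩
  rw [← hc i, heval, heval, ← sub_eq_zero, ← map_sub]
  exact hker _ (Submodule.subset_span ⟨i, rfl⟩)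
end

section
/- Let g₁, …, g_n ∈ 𝔽_{q^m} be linearly independent over 𝔽_q, let f be a q-linearized polynomial over 𝔽_{q^m} of q-degree less than k, let c = (f(g₁), …, f(g_n)) and let r = (r₁, …, r_n) ∈ 𝔽_{q^m}^n. If there exists a nonzero q-linearized polynomial D over 𝔽_{q^m} of q-degree t such that D(r_i) = D(f(g_i)) for all i = 1, …, n, then every element of span_{𝔽_q}(r₁ − c₁, …, r_n − c_n) is a root of D, and consequently d_R(c, r) ≤ t. -/
/-! For `q = |K|`, each monomial `X ^ (q ^ i)` evaluates to the `i`-th iterate of the `K`-linear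
Frobenius of `L`, so evaluation of a `q`-linearized polynomial `D` is a `K`-linear endomorphism
of `L` (`IsLinearized.evalLin`). The interpolation condition puts each `rᵢ - cᵢ` in its kernel,
hence their whole span. Counting roots, a kernel of dimension `d` has `q ^ d ≤ deg D = q ^ t`
elements, so `d ≤ t` (`IsLinearized.finrank_ker_le`). -/

open Polynomial

section

variable {K L : Type*} [Field K] [Field L] [Algebra K L] [Fintype K]

/-- Evaluation of a `q`-linearized polynomial, `q = |K|`, as a `K`-linear endomorphism of `L`. -/
noncomputable def IsLinearized.evalLin {D : L[X]} (hD : IsLinearized (Fintype.card K) D) :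
    L →ₗ[K] L where
  toFun x := D.eval x
  map_add' x y := by
    simp only [eval_eq_sum, Polynomial.sum, ← Finset.sum_add_distrib]
    refine Finset.sum_congr rfl fun e he => ?_
    obtain ⟨i, rfl⟩ := hD e (mem_support_iff.mp he)
    have h := map_add (FiniteField.frobeniusAlgHom K L ^ i) x y
    simp only [AlgHom.coe_pow, FiniteField.coe_frobeniusAlgHom, pow_iterate] at h
    rw [h, mul_add]
  map_smul' a x := by
    simp only [eval_eq_sum, Polynomial.sum, Finset.smul_sum, RingHom.id_apply]
    refine Finset.sum_congr rfl fun e he => ?_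
    obtain ⟨i, rfl⟩ := hD e (mem_support_iff.mp he)
    rw [_root_.smul_pow, FiniteField.pow_card_pow, mul_smul_comm]

theorem IsLinearized.finrank_ker_le [Finite L] {D : L[X]}
    (hD : IsLinearized (Fintype.card K) D) (hD0 : D ≠ 0) {t : ℕ}
    (ht : D.natDegree = Fintype.card K ^ t) :
    Module.finrank K (LinearMap.ker hD.evalLin) ≤ t := by
  classical
  have hsub : ((LinearMap.ker hD.evalLin : Submodule K L) : Set L) ⊆ D.roots.toFinset := by
    intro x hx
    have hx' : D.eval x = 0 := hx
    simp [hD0, hx']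
  have hcard : Nat.card (LinearMap.ker hD.evalLin) ≤ D.natDegree := by
    calc Nat.card (LinearMap.ker hD.evalLin)
        = ((LinearMap.ker hD.evalLin : Submodule K L) : Set L).ncard := rfl
      _ ≤ (D.roots.toFinset : Set L).ncard := Set.ncard_le_ncard hsub (Finset.finite_toSet _)
      _ = D.roots.toFinset.card := Set.ncard_coe_finset _
      _ ≤ D.natDegree := (Multiset.toFinset_card_le _).trans (card_roots' D)
  rw [Module.natCard_eq_pow_finrank (K := K), Nat.card_eq_fintype_card, ht] at hcard
  exact (Nat.pow_le_pow_iff_right Fintype.one_lt_card).mp hcard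

end

/-- With `g`, `f`, `c`, `r` as before, if there exists a nonzero
`q`-linearized polynomial `D` of `q`-degree `t` with `D(rᵢ) = D(f(gᵢ))` for all `i`, then
every element of `span(r₁−c₁, …, r_n−c_n)` is a root of `D`, and `d_R(c, r) ≤ t`. -/
theorem stmt5 (K L : Type*) [Field K] [Field L] [Algebra K L] [Fintype K] [Fintype L]
    (q m : ℕ) (hq : q = Fintype.card K) (hm : Fintype.card L = q ^ m)
    (n k : ℕ) (g : Fin n → L) (hg : LinearIndependent K g)
    (f : L[X]) (hflin : IsLinearized q f) (hfdeg : f.degree < (q ^ k : ℕ))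
    (c r : Fin n → L) (hc : ∀ i, c i = f.eval (g i))
    (t : ℕ) (D : L[X]) (hD : D ≠ 0) (hDlin : IsLinearized q D) (hDdeg : D.natDegree = q ^ t)
    (hint : ∀ i, D.eval (r i) = D.eval (f.eval (g i))) :
    (∀ β ∈ Submodule.span K (Set.range fun i => r i - c i), D.eval β = 0) ∧
      rankDist K c r ≤ t := by
  subst hq
  have hker : ∀ i, r i - c i ∈ LinearMap.ker hDlin.evalLin := fun i => by
    have h : hDlin.evalLin (r i) = hDlin.evalLin (c i) := by
      rw [hc i]
      exact hint i
    rw [LinearMap.mem_ker, map_sub, h, sub_self]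
  refine ⟨fun β hβ => ?_, ?_⟩
  · exact (Submodule.span_le (p := LinearMap.ker hDlin.evalLin)).mpr
      (Set.range_subset_iff.mpr hker) hβ
  · refine (Submodule.finrank_mono (t := LinearMap.ker hDlin.evalLin)
      (Submodule.span_le.mpr (Set.range_subset_iff.mpr fun i => ?_))).trans
      (hDlin.finrank_ker_le hD hDdeg)
    rw [← neg_sub]
    exact neg_mem (hker i)
end

section
/- Let g₁, …, g_n ∈ 𝔽_{q^m} be linearly independent over 𝔽_q, let r = (r₁, …, r_n) ∈ 𝔽_{q^m}^n, let Π(X) = ∏_{α ∈ span_{𝔽_q}(g₁, …, g_n)} (X − α) and let Λ_{g,r} be the unique q-linearized polynomial of degree at most q^{n−1} with Λ_{g,r}(g_i) = r_i for all i. If f and g are q-linearized polynomials over 𝔽_{q^m} such that f(g_i) + g(r_i) = 0 for all i = 1, …, n, then there exists a q-linearized polynomial a over 𝔽_{q^m} such that a ∘ Π = f + g ∘ Λ_{g,r} (composition ∘ of polynomials); in particular (f, g) lies in the interpolation module 𝔐(r). -/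
/-!
Linearized polynomials form the `L`-span of the monomials `X ^ q ^ i`. This span is closed under
`q`-power Frobenius and hence under composition, and each of its members evaluates as a
`K`-linear map `L → L`. Therefore `h = f + g ∘ Λ` is linearized, and since it vanishes at every
`gᵢ` it vanishes on the whole space `V = span(g₁, …, g_n)`.

The polynomial `Π` is itself linearized: by counting dimensions there is a nonzero linearized
polynomial of degree at most `q ^ n` vanishing at the `n` points `gᵢ`, hence on `V`. It is
divisible by `Π`, which has degree `#V = q ^ n`, so the two agree up to a scalar
(`isLinearized_subspacePoly`).

Finally `h` is right-divided by `Π` for composition (`exists_comp_eq`). If `h ≠ 0` has degree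
`q ^ k`, then `Π ∣ h` forces `n ≤ k`, and subtracting a multiple of `X ^ q ^ (k - n) ∘ Π` from `h`
lowers the degree while keeping `h` linearized and zero on `V`; the process ends at `0`.
-/

open Polynomial

section Linearized

variable {K L : Type*} [Field K] [Field L] [Algebra K L] [Fintype K]

/-- `x ↦ x ^ q ^ i` as a `K`-algebra endomorphism, for `q = #K`. -/
noncomputable def frobPow (K A : Type*) [Field K] [Fintype K] [CommRing A] [Algebra K A] (i : ℕ) :
    A →ₐ[K] A :=
  FiniteField.frobeniusAlgHom K A ^ i

lemma frobPow_apply {A : Type*} [CommRing A] [Algebra K A] (i : ℕ) (x : A) :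
    frobPow K A i x = x ^ Fintype.card K ^ i := by
  rw [frobPow, AlgHom.coe_pow, FiniteField.coe_frobeniusAlgHom, pow_iterate]

lemma isLinearized_iff_mem_span {q : ℕ} {f : L[X]} :
    IsLinearized q f ↔ f ∈ Submodule.span L (Set.range fun i : ℕ => (X : L[X]) ^ q ^ i) := by
  constructor
  · intro hf
    rw [f.as_sum_support_C_mul_X_pow]
    refine Submodule.sum_mem _ fun n hn => ?_
    obtain ⟨i, rfl⟩ := hf n (mem_support_iff.1 hn)
    rw [← smul_eq_C_mul]
    exact Submodule.smul_mem _ _ (Submodule.subset_span ⟨i, rfl⟩)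
  · intro hf
    induction hf using Submodule.span_induction with
    | mem x hx =>
      obtain ⟨i, rfl⟩ := hx
      intro n hn
      refine ⟨i, ?_⟩
      by_contra hne
      simp [coeff_X_pow, hne] at hn
    | zero => intro n hn; simp at hn
    | add x y _ _ hx hy =>
      intro n hn
      by_cases h : x.coeff n = 0
      · exact hy n (by simpa [h] using hn)
      · exact hx n h
    | smul c x _ hx =>
      intro n hn
      exact hx n fun h => hn (by simp [h])

/-- Induction principle for linearized polynomials, as elements of the span of the
`X ^ q ^ i`. -/
lemma IsLinearized.induction {q : ℕ} {P : L[X] → Prop} {f : L[X]} (hf : IsLinearized q f)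
    (mono : ∀ i : ℕ, P (X ^ q ^ i)) (zero : P 0) (add : ∀ x y, P x → P y → P (x + y))
    (smul : ∀ (c : L) x, P x → P (C c * x)) : P f := by
  rw [isLinearized_iff_mem_span] at hf
  induction hf using Submodule.span_induction with
  | mem x hx => obtain ⟨i, rfl⟩ := hx; exact mono i
  | zero => exact zero
  | add x y _ _ hx hy => exact add x y hx hy
  | smul c x _ hx => rw [smul_eq_C_mul]; exact smul c x hx

lemma isLinearized_zero (q : ℕ) : IsLinearized q (0 : L[X]) := fun n hn => by simp at hn

lemma isLinearized_X_pow (q i : ℕ) : IsLinearized q (X ^ q ^ i : L[X]) :=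
  isLinearized_iff_mem_span.2 (Submodule.subset_span ⟨i, rfl⟩)

lemma IsLinearized.add {q : ℕ} {f g : L[X]} (hf : IsLinearized q f) (hg : IsLinearized q g) :
    IsLinearized q (f + g) := by
  rw [isLinearized_iff_mem_span] at *
  exact Submodule.add_mem _ hf hg

lemma IsLinearized.sub {q : ℕ} {f g : L[X]} (hf : IsLinearized q f) (hg : IsLinearized q g) :
    IsLinearized q (f - g) := by
  rw [isLinearized_iff_mem_span] at *
  exact Submodule.sub_mem _ hf hg

lemma IsLinearized.C_mul {q : ℕ} {f : L[X]} (hf : IsLinearized q f) (c : L) :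
    IsLinearized q (C c * f) := by
  rw [isLinearized_iff_mem_span] at *
  rw [← smul_eq_C_mul]
  exact Submodule.smul_mem _ _ hf

lemma IsLinearized.pow {f : L[X]} (hf : IsLinearized (Fintype.card K) f) (i : ℕ) :
    IsLinearized (Fintype.card K) (f ^ Fintype.card K ^ i) := by
  refine hf.induction (P := fun f => IsLinearized (Fintype.card K) (f ^ Fintype.card K ^ i))
    (fun j => ?_) ?_ (fun x y hx hy => ?_) (fun c x hx => ?_)
  · rw [← pow_mul, ← pow_add]
    exact isLinearized_X_pow _ _
  · rw [zero_pow (pow_ne_zero _ Fintype.card_ne_zero)]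
    exact isLinearized_zero _
  · rw [← frobPow_apply (K := K), map_add, frobPow_apply, frobPow_apply]
    exact hx.add hy
  · rw [mul_pow, ← C_pow]
    exact hx.C_mul _

lemma IsLinearized.comp {f g : L[X]} (hf : IsLinearized (Fintype.card K) f)
    (hg : IsLinearized (Fintype.card K) g) : IsLinearized (Fintype.card K) (f.comp g) := by
  refine hf.induction (P := fun f => IsLinearized (Fintype.card K) (f.comp g))
    (fun j => ?_) ?_ (fun x y hx hy => ?_) (fun c x hx => ?_)
  · rw [X_pow_comp]
    exact hg.pow j
  · rw [zero_comp]
    exact isLinearized_zero _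
  · rw [add_comp]
    exact hx.add hy
  · rw [C_mul_comp]
    exact hx.C_mul _

lemma IsLinearized.eval_add {f : L[X]} (hf : IsLinearized (Fintype.card K) f) (x y : L) :
    f.eval (x + y) = f.eval x + f.eval y := by
  refine hf.induction (P := fun f => f.eval (x + y) = f.eval x + f.eval y)
    (fun i => ?_) (by simp) (fun a b ha hb => ?_) (fun c a ha => ?_)
  · simp only [eval_pow, eval_X]
    simp only [← frobPow_apply (K := K), map_add]
  · simp only [Polynomial.eval_add, ha, hb]; ring
  · simp only [eval_mul, eval_C, ha]; ring

lemma IsLinearized.eval_smul {f : L[X]} (hf : IsLinearized (Fintype.card K) f) (c : K) (x : L) :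
    f.eval (c • x) = c • f.eval x := by
  refine hf.induction (P := fun f => f.eval (c • x) = c • f.eval x)
    (fun i => ?_) (by simp) (fun a b ha hb => ?_) (fun d a ha => ?_)
  · simp only [eval_pow, eval_X]
    simp only [← frobPow_apply (K := K), map_smul]
  · simp only [Polynomial.eval_add, ha, hb, smul_add]
  · simp only [eval_mul, eval_C, ha, mul_smul_comm]

lemma IsLinearized.eval_zero {f : L[X]} (hf : IsLinearized (Fintype.card K) f) :
    f.eval 0 = 0 := by
  simpa using hf.eval_smul (0 : K) 0

lemma IsLinearized.eval_eq_zero_of_mem_span {f : L[X]} (hf : IsLinearized (Fintype.card K) f)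
    {s : Set L} (hs : ∀ x ∈ s, f.eval x = 0) {x : L} (hx : x ∈ Submodule.span K s) :
    f.eval x = 0 := by
  induction hx using Submodule.span_induction with
  | mem x hx => exact hs x hx
  | zero => exact hf.eval_zero
  | add x y _ _ hx hy => rw [hf.eval_add, hx, hy, add_zero]
  | smul c x _ hx => rw [hf.eval_smul, hx, smul_zero]

/-- There are `n + 1` coefficients available up to degree `q ^ n` and only `n` linear
conditions on them. -/
lemma exists_isLinearized_eval_eq_zero {q : ℕ} (hq : 1 < q) {n : ℕ} (gen : Fin n → L) :
    ∃ p : L[X], p ≠ 0 ∧ IsLinearized q p ∧ p.natDegree ≤ q ^ n ∧ ∀ i, p.eval (gen i) = 0 := by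
  let φ : (Fin (n + 1) → L) →ₗ[L] (Fin n → L) :=
    LinearMap.pi fun j => ∑ i : Fin (n + 1), (gen j ^ q ^ (i : ℕ)) • LinearMap.proj i
  have hker : LinearMap.ker φ ≠ ⊥ := LinearMap.ker_ne_bot_of_finrank_lt (by simp)
  obtain ⟨c, hc, hc0⟩ := Submodule.exists_mem_ne_zero_of_ne_bot hker
  refine ⟨∑ i : Fin (n + 1), C (c i) * X ^ q ^ (i : ℕ), ?_, ?_, ?_, ?_⟩
  · obtain ⟨i, hi⟩ := Function.ne_iff.1 hc0
    intro h0
    refine hi ?_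
    have := congrArg (coeff · (q ^ (i : ℕ))) h0
    simpa [finsetSum_coeff, coeff_X_pow, Nat.pow_right_inj hq, Fin.val_inj] using this
  · exact Finset.sum_induction _ (IsLinearized q) (fun _ _ => IsLinearized.add)
      (isLinearized_zero q) fun i _ => (isLinearized_X_pow q i).C_mul _
  · refine natDegree_sum_le_of_forall_le _ _ fun i _ => ?_
    exact (natDegree_C_mul_X_pow_le _ _).trans
      (Nat.pow_le_pow_right hq.le (Nat.lt_succ_iff.1 i.2))
  · intro j
    have := congrFun (LinearMap.mem_ker.1 hc) j
    simp only [φ, LinearMap.pi_apply, LinearMap.sum_apply, LinearMap.smul_apply,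
      LinearMap.proj_apply, smul_eq_mul, Pi.zero_apply] at this
    simp only [eval_finsetSum, eval_mul, eval_C, eval_pow, eval_X]
    rw [← this]
    exact Finset.sum_congr rfl fun i _ => mul_comm _ _

lemma prod_X_sub_C_dvd_of_eval_eq_zero (s : Finset L) {h : L[X]}
    (hh : ∀ x ∈ s, h.eval x = 0) : ∏ α ∈ s, (X - C α) ∣ h :=
  Finset.prod_dvd_of_coprime
    (fun _ _ _ _ hab => pairwise_coprime_X_sub_C Function.injective_id hab)
    fun x hx => dvd_iff_isRoot.2 (hh x hx)

/-- A monic polynomial of degree `q ^ n` dividing every polynomial that vanishes on the span of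
`n` points is linearized, being proportional to the polynomial obtained by counting dimensions. -/
lemma isLinearized_subspacePoly {n : ℕ} (gen : Fin n → L) {Pi : L[X]} (hmonic : Pi.Monic)
    (hdeg : Pi.natDegree = Fintype.card K ^ n)
    (hdvd : ∀ h : L[X], (∀ x ∈ Submodule.span K (Set.range gen), h.eval x = 0) → Pi ∣ h) :
    IsLinearized (Fintype.card K) Pi := by
  obtain ⟨p, hp0, hp, hpdeg, hpe⟩ :=
    exists_isLinearized_eval_eq_zero (Fintype.one_lt_card (α := K)) gen
  have hpV : ∀ x ∈ Submodule.span K (Set.range gen), p.eval x = 0 := fun x hx =>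
    hp.eval_eq_zero_of_mem_span (by rintro _ ⟨i, rfl⟩; exact hpe i) hx
  have key := eq_leadingCoeff_mul_of_monic_of_dvd_of_natDegree_le hmonic (hdvd p hpV)
    (hpdeg.trans hdeg.ge)
  have h2 : Pi = C p.leadingCoeff⁻¹ * p := by
    conv_rhs => rw [key]
    rw [← mul_assoc, leadingCoeff_mul_monic hmonic, leadingCoeff_C, ← C_mul,
      inv_mul_cancel₀ (leadingCoeff_ne_zero.2 hp0), C_1, one_mul]
  rw [h2]
  exact hp.C_mul _

/-- Exact right division by `Pi` with respect to composition. -/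
lemma exists_comp_eq {n : ℕ} {V : Set L} {Pi : L[X]} (hmonic : Pi.Monic)
    (hdeg : Pi.natDegree = Fintype.card K ^ n)
    (hdvd : ∀ h : L[X], (∀ x ∈ V, h.eval x = 0) → Pi ∣ h)
    (hPiV : ∀ x ∈ V, Pi.eval x = 0) (hPi : IsLinearized (Fintype.card K) Pi) :
    ∀ (d : ℕ) (h : L[X]), h.degree < d → IsLinearized (Fintype.card K) h →
      (∀ x ∈ V, h.eval x = 0) → ∃ a : L[X], IsLinearized (Fintype.card K) a ∧ a.comp Pi = h := by
  intro d
  induction d with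
  | zero =>
    intro h hd _ _
    have h0 : h = 0 := degree_eq_bot.1 (Nat.WithBot.lt_zero_iff.1 hd)
    exact ⟨0, isLinearized_zero _, by simp [h0]⟩
  | succ d ih =>
    intro h hd hlin hV
    by_cases h0 : h = 0
    · exact ⟨0, isLinearized_zero _, by simp [h0]⟩
    obtain ⟨k, hk⟩ := hlin h.natDegree (by simpa using h0)
    have hnk : n ≤ k := by
      have := natDegree_le_of_dvd (hdvd h hV) h0
      rw [hdeg, hk] at this
      exact (Nat.pow_le_pow_iff_right (Fintype.one_lt_card (α := K))).1 this
    -- `X ^ q ^ (k - n) ∘ Pi` has degree `q ^ (k - n) * q ^ n = q ^ k`, the degree of `h`.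
    set t : L[X] := C h.leadingCoeff * Pi ^ Fintype.card K ^ (k - n) with ht
    have hPm : (Pi ^ Fintype.card K ^ (k - n)).Monic := hmonic.pow _
    have hlc : t.leadingCoeff = h.leadingCoeff := by
      rw [ht, leadingCoeff_mul_monic hPm, leadingCoeff_C]
    have hlc0 : h.leadingCoeff ≠ 0 := leadingCoeff_ne_zero.2 h0
    have hdt : h.degree = t.degree := by
      rw [ht, degree_C_mul hlc0, degree_eq_natDegree h0, degree_eq_natDegree hPm.ne_zero,
        hmonic.natDegree_pow, hdeg, ← pow_add, Nat.sub_add_cancel hnk, hk]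
    have hlt : (h - t).degree < d :=
      (degree_sub_lt_left hdt h0 hlc.symm).trans_le (by
        rw [degree_eq_natDegree h0] at hd ⊢
        exact_mod_cast Nat.lt_succ_iff.1 (by exact_mod_cast hd))
    obtain ⟨a, ha, hac⟩ := ih (h - t) hlt (hlin.sub ((hPi.pow _).C_mul _)) fun x hx => by
      simp [ht, hV x hx, hPiV x hx]
    refine ⟨a + C h.leadingCoeff * X ^ Fintype.card K ^ (k - n),
      ha.add ((isLinearized_X_pow _ _).C_mul _), ?_⟩
    rw [add_comp, hac, C_mul_comp, X_pow_comp, sub_add_cancel]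

end Linearized

/-- Let `g₁, …, g_n ∈ 𝔽_{q^m}` be linearly independent over `𝔽_q`, let
`r ∈ 𝔽_{q^m}^n`, let `Π(X) = ∏_{α ∈ span(g₁, …, g_n)} (X − α)` and let `Λ` be the unique
`q`-linearized polynomial of degree at most `q^(n−1)` with `Λ(gᵢ) = rᵢ` for all `i`.
If `f` and `g` are `q`-linearized polynomials with `f(gᵢ) + g(rᵢ) = 0` for all `i`, then
there is a `q`-linearized polynomial `a` with `a ∘ Π = f + g ∘ Λ`; in particular `(f, g)`
lies in the interpolation module `𝔐(r)`. -/
theorem stmt12 (K L : Type*) [Field K] [Field L] [Algebra K L] [Fintype K] [Fintype L]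
    (q m : ℕ) (hq : q = Fintype.card K) (hm : Fintype.card L = q ^ m)
    (n : ℕ) (hn : 0 < n) (gen : Fin n → L) (hgen : LinearIndependent K gen) (r : Fin n → L)
    (Pi : L[X])
    (hPi : Pi = ∏ α ∈ (Set.toFinite ((Submodule.span K (Set.range gen) : Submodule K L) : Set L)).toFinset, (X - C α))
    (Lam : L[X]) (hLamLin : IsLinearized q Lam) (hLamDeg : Lam.degree ≤ (q ^ (n - 1) : ℕ))
    (hLam : ∀ i, Lam.eval (gen i) = r i)
    (f g : L[X]) (hflin : IsLinearized q f) (hglin : IsLinearized q g)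
    (hfg : ∀ i, f.eval (gen i) + g.eval (r i) = 0) :
    ∃ a : L[X], IsLinearized q a ∧ a.comp Pi = f + g.comp Lam := by
  subst hq
  have hmem : ∀ x, x ∈ (Set.toFinite ((Submodule.span K (Set.range gen) : Submodule K L) :
      Set L)).toFinset ↔ x ∈ Submodule.span K (Set.range gen) := fun x => by simp
  have hmonic : Pi.Monic := hPi ▸ monic_prod_X_sub_C _ _
  have hdeg : Pi.natDegree = Fintype.card K ^ n := by
    rw [hPi, natDegree_finsetProd_X_sub_C_eq_card, ← Set.ncard_eq_toFinset_card,
      ← Nat.card_coe_set_eq]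
    have := Module.natCard_eq_pow_finrank (K := K) (V := Submodule.span K (Set.range gen))
    rw [finrank_span_eq_card hgen, Fintype.card_fin, Nat.card_eq_fintype_card (α := K)] at this
    exact this
  have hdvd : ∀ h : L[X], (∀ x ∈ Submodule.span K (Set.range gen), h.eval x = 0) → Pi ∣ h :=
    fun h hh => hPi ▸ prod_X_sub_C_dvd_of_eval_eq_zero _ fun x hx => hh x ((hmem x).1 hx)
  have hPiV : ∀ x ∈ Submodule.span K (Set.range gen), Pi.eval x = 0 := fun x hx => by
    rw [hPi, eval_prod]
    exact Finset.prod_eq_zero ((hmem x).2 hx) (by simp)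
  have hPilin := isLinearized_subspacePoly gen hmonic hdeg hdvd
  have hlin : IsLinearized (Fintype.card K) (f + g.comp Lam) := hflin.add (hglin.comp hLamLin)
  exact exists_comp_eq (V := Submodule.span K (Set.range gen)) hmonic hdeg hdvd hPiV hPilin _ _
    (degree_le_natDegree.trans_lt (WithBot.coe_lt_coe.2 (Nat.lt_succ_self _))) hlin fun x hx =>
      hlin.eval_eq_zero_of_mem_span
        (by rintro _ ⟨i, rfl⟩; rw [Polynomial.eval_add, eval_comp, hLam, hfg]) hx
end

section
/- Let g₁, …, g_n ∈ 𝔽_{q^m} be linearly independent over 𝔽_q, let 1 ≤ k ≤ n, let r = (r₁, …, r_n) ∈ 𝔽_{q^m}^n, let f be a q-linearized polynomial over 𝔽_{q^m} of q-degree less than k, and set c = (f(g₁), …, f(g_n)). Suppose d_R(c, r) = t and let D = ∏_{β ∈ span_{𝔽_q}(r₁ − c₁, …, r_n − c_n)} (X − β). Then the pair N = D ∘ f, together with D, satisfies: N(g_i) − D(r_i) = 0 for all i (so (N, −D) lies in the interpolation module 𝔐(r)); the q-degree of N is at most t + k − 1; D is q-linearized of q-degree t; and N is symbolically divisible on the right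 by D. -/
/-!
The only substantial claim is that the annihilator polynomial `D` of a `t`-dimensional subspace
`V` of `L` is `q`-linearized. A `q`-linearized polynomial induces a `K`-linear map
(`IsLinearized.exists_linearMap`), so it vanishes on `V` as soon as it vanishes on a basis of `V`.
This imposes `t` homogeneous linear equations over `L` on the `t + 1` coefficients of
`∑ i ≤ t, aᵢ X ^ q ^ i`, hence there is a nonzero solution `P`
(`exists_linearized_annihilator`). As `D ∣ P` and
`deg P ≤ q ^ t = |V| = deg D`, the polynomial `D` is a scalar multiple of `P`.

Everything else follows: by additivity `D (f (gᵢ)) - D (rᵢ) = -D (rᵢ - cᵢ) = 0`, the degree of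
`D ∘ f` is the product of the degrees, and the quotient in `N = D ∘ h` is `h = f`.
-/

open Polynomial

/-- A `q`-linearized polynomial, with `q = |K|`, induces a `K`-linear map, since each
`x ↦ x ^ q ^ i` is a power of the `K`-linear Frobenius. -/
theorem IsLinearized.exists_linearMap {K L : Type*} [Field K] [Field L] [Algebra K L] [Fintype K]
    {f : L[X]} (hf : IsLinearized (Fintype.card K) f) :
    ∃ φ : L →ₗ[K] L, ∀ x, φ x = f.eval x := by
  refine ⟨∑ n ∈ f.support, f.coeff n •
    ((FiniteField.frobeniusAlgHom K L) ^ (Nat.log (Fintype.card K) n)).toLinearMap, fun x => ?_⟩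
  rw [eval_eq_sum, Polynomial.sum, LinearMap.sum_apply]
  refine Finset.sum_congr rfl fun n hn => ?_
  obtain ⟨i, rfl⟩ := hf n (mem_support_iff.1 hn)
  rw [Nat.log_pow Fintype.one_lt_card]
  simp only [LinearMap.smul_apply, AlgHom.toLinearMap_apply, smul_eq_mul,
    AlgHom.coe_pow, FiniteField.coe_frobeniusAlgHom, pow_iterate]

/-- With `q = |K|`, a `t`-dimensional subspace of an extension field of `K`
is annihilated by a nonzero linearized polynomial of degree at most `q ^ t`. -/
theorem exists_linearized_annihilator {K L : Type*} [Field K] [Field L] [Algebra K L] [Fintype K]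
    (V : Submodule K L) [FiniteDimensional K V] :
    ∃ P : L[X], P ≠ 0 ∧ IsLinearized (Fintype.card K) P ∧
      P.natDegree ≤ Fintype.card K ^ Module.finrank K V ∧ ∀ x ∈ V, P.eval x = 0 := by
  set t := Module.finrank K V
  set q := Fintype.card K
  have hq : 1 < q := Fintype.one_lt_card
  let b := Module.finBasis K V
  -- Evaluation at the basis vectors, as a function of the coefficients `a 0, …, a t`.
  let E : (Fin (t + 1) → L) →ₗ[L] (Fin t → L) :=
    (Matrix.of fun (j : Fin t) (i : Fin (t + 1)) => ((b j : V) : L) ^ q ^ (i : ℕ)).mulVecLin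
  obtain ⟨a, ha, ha0⟩ := (Submodule.ne_bot_iff _).1
    (LinearMap.ker_ne_bot_of_finrank_lt (f := E) (by simp))
  let P : L[X] := ∑ i : Fin (t + 1), C (a i) * X ^ q ^ (i : ℕ)
  have hcoeff (n : ℕ) : P.coeff n = ∑ i : Fin (t + 1), if n = q ^ (i : ℕ) then a i else 0 := by
    simp [P, coeff_X_pow]
  have hlin : IsLinearized q P := by
    intro n hn
    rw [hcoeff] at hn
    obtain ⟨i, -, hi⟩ := Finset.exists_ne_zero_of_sum_ne_zero hn
    exact ⟨i, by by_contra h; simp [h] at hi⟩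
  refine ⟨P, ?_, hlin, ?_, ?_⟩
  · obtain ⟨i, hi⟩ := Function.ne_iff.1 ha0
    intro hP
    apply hi
    have h := hcoeff (q ^ (i : ℕ))
    rw [hP, Finset.sum_eq_single i] at h
    · simpa using h.symm
    · intro j _ hj
      rw [if_neg]
      intro h
      exact hj (Fin.ext (Nat.pow_right_injective hq h.symm))
    · simp
  · refine natDegree_sum_le_of_forall_le _ _ fun i _ => ?_
    exact (natDegree_C_mul_X_pow_le _ _).trans (Nat.pow_le_pow_right hq.le (by omega))
  · obtain ⟨φ, hφ⟩ := hlin.exists_linearMap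
    have hzero : φ ∘ₗ V.subtype = 0 := by
      refine b.ext fun j => ?_
      have h := congrFun (LinearMap.mem_ker.1 ha) j
      simp only [E, Matrix.mulVecLin_apply, Matrix.mulVec, dotProduct, Matrix.of_apply,
        Pi.zero_apply] at h
      simp only [LinearMap.comp_apply, Submodule.subtype_apply, hφ, LinearMap.zero_apply]
      rw [← h]
      simp only [P, eval_finsetSum, eval_mul, eval_C, eval_pow, eval_X, mul_comm]
    intro x hx
    rw [← hφ]
    exact LinearMap.congr_fun hzero ⟨x, hx⟩

/-- The annihilator polynomial of a finite subspace is linearized, being proportional to any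
nonzero linearized polynomial of the same degree vanishing on that subspace. -/
theorem isLinearized_prod_X_sub_C {K L : Type*} [Field K] [Field L] [Algebra K L] [Fintype K]
    (V : Submodule K L) [FiniteDimensional K V] (s : Finset L) (hs : ∀ x, x ∈ s ↔ x ∈ V)
    (hcard : s.card = Fintype.card K ^ Module.finrank K V) :
    IsLinearized (Fintype.card K) (∏ β ∈ s, (X - C β) : L[X]) := by
  obtain ⟨P, hP0, hP, hdeg, hzero⟩ := exists_linearized_annihilator V
  have hdvd : (∏ β ∈ s, (X - C β) : L[X]) ∣ P :=
    Finset.prod_dvd_of_coprime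
      (fun x _ y _ hxy => pairwise_coprime_X_sub_C Function.injective_id hxy)
      fun x hx => dvd_iff_isRoot.2 (hzero x ((hs x).1 hx))
  have hmonic : (∏ β ∈ s, (X - C β) : L[X]).Monic := monic_prod_of_monic _ _ fun x _ => monic_X_sub_C x
  have heq := eq_leadingCoeff_mul_of_monic_of_dvd_of_natDegree_le hmonic hdvd (by
    rw [natDegree_finsetProd_X_sub_C_eq_card, hcard]
    exact hdeg)
  intro n hn
  refine hP n ?_
  rw [heq, coeff_C_mul]
  exact mul_ne_zero (leadingCoeff_ne_zero.2 hP0) hn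

/-- Let `g₁, …, g_n ∈ 𝔽_{q^m}` be linearly independent over `𝔽_q`,
`1 ≤ k ≤ n`, `r ∈ 𝔽_{q^m}^n`, `f` a `q`-linearized polynomial of `q`-degree less than `k`,
and `c = (f(g₁), …, f(g_n))`. Suppose `d_R(c, r) = t` and let
`D = ∏_{β ∈ span(r₁−c₁, …, r_n−c_n)} (X − β)`. Then `N = D ∘ f` satisfies
`N(gᵢ) − D(rᵢ) = 0` for all `i` (so `(N, −D)` lies in the interpolation module `𝔐(r)`);
the `q`-degree of `N` is at most `t + k − 1`; `D` is `q`-linearized of `q`-degree `t`; and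
`N` is symbolically divisible on the right by `D`. -/
theorem stmt13 (K L : Type*) [Field K] [Field L] [Algebra K L] [Fintype K] [Fintype L]
    (q m : ℕ) (hq : q = Fintype.card K) (hm : Fintype.card L = q ^ m)
    (n k : ℕ) (hk1 : 1 ≤ k) (hkn : k ≤ n)
    (g : Fin n → L) (hg : LinearIndependent K g) (r : Fin n → L)
    (f : L[X]) (hflin : IsLinearized q f) (hfdeg : f.degree < (q ^ k : ℕ))
    (c : Fin n → L) (hc : ∀ i, c i = f.eval (g i))
    (t : ℕ) (ht : rankDist K c r = t)
    (D : L[X])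
    (hD : D = ∏ β ∈ (Set.toFinite ((Submodule.span K (Set.range fun i => r i - c i) : Submodule K L) : Set L)).toFinset, (X - C β))
    (N : L[X]) (hN : N = D.comp f) :
    (∀ i, N.eval (g i) - D.eval (r i) = 0) ∧
      N.degree ≤ (q ^ (t + k - 1) : ℕ) ∧
      IsLinearized q D ∧ D.natDegree = q ^ t ∧
      ∃ h : L[X], IsLinearized q h ∧ N = D.comp h := by
  classical
  subst hq
  set V : Submodule K L := Submodule.span K (Set.range fun i => r i - c i) with hV
  have hdim : Module.finrank K V = t := by
    have hneg : (Set.range fun i => c i - r i) = -(Set.range fun i => r i - c i) := by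
      rw [← Set.image_neg_eq_neg, ← Set.range_comp]
      congr 1
      ext i
      simp
    rw [← ht, rankDist, hneg, Submodule.span_neg]
  have hmem (x : L) : x ∈ (Set.toFinite (V : Set L)).toFinset ↔ x ∈ V := by simp
  have hcard : (Set.toFinite (V : Set L)).toFinset.card = Fintype.card K ^ t := by
    rw [← hdim, ← Set.ncard_eq_toFinset_card, ← Nat.card_eq_fintype_card (α := K)]
    exact Module.natCard_eq_pow_finrank (K := K) (V := V)
  have hDlin : IsLinearized (Fintype.card K) D := by
    rw [hD]
    exact isLinearized_prod_X_sub_C V _ hmem (by rw [hcard, hdim])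
  have hDdeg : D.natDegree = Fintype.card K ^ t := by
    rw [hD, natDegree_finsetProd_X_sub_C_eq_card, hcard]
  have hDzero (x : L) (hx : x ∈ V) : D.eval x = 0 := by
    rw [hD, eval_prod]
    exact Finset.prod_eq_zero ((hmem x).2 hx) (by simp)
  refine ⟨fun i => ?_, ?_, hDlin, hDdeg, f, hflin, hN⟩
  · obtain ⟨φ, hφ⟩ := hDlin.exists_linearMap
    have h := hDzero _ (Submodule.subset_span ⟨i, rfl⟩ : r i - c i ∈ V)
    rw [← hφ, map_sub, hφ, hφ] at h
    rw [hN, eval_comp, ← hc, ← neg_sub, h, neg_zero]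
  · have hq : 1 < Fintype.card K := Fintype.one_lt_card
    -- The degree of a nonzero `f` is a power of `q` smaller than `q ^ k`.
    have hf : f.natDegree ≤ Fintype.card K ^ (k - 1) := by
      by_cases hf0 : f = 0
      · simp [hf0]
      obtain ⟨i, hi⟩ := hflin f.natDegree (leadingCoeff_ne_zero.2 hf0)
      have hlt := (natDegree_lt_iff_degree_lt hf0).2 hfdeg
      rw [hi] at hlt ⊢
      have := (Nat.pow_lt_pow_iff_right hq).1 hlt
      exact Nat.pow_le_pow_right hq.le (by omega)
    refine natDegree_le_iff_degree_le.1 ?_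
    rw [hN, natDegree_comp, hDdeg, Nat.add_sub_assoc hk1, pow_add]
    exact Nat.mul_le_mul_left _ hf
end

section
/- Let g₁, …, g_n ∈ 𝔽_{q^m} be linearly independent over 𝔽_q, let 1 ≤ k ≤ n, and let C ⊆ 𝔽_{q^m}^n be the Gabidulin code generated by the Moore matrix M_k(g₁, …, g_n). Then the minimum rank distance of C equals n − k + 1; that is, every nonzero codeword c ∈ C satisfies dim_{𝔽_q} span_{𝔽_q}{c₁, …, c_n} ≥ n − k + 1, and some nonzero codeword attains this value. -/
/-!
A codeword of `C` has the form `c = (f g₁, …, f g_n)`, where `f x = ∑ aᵢ x^(q^i)` is the evaluation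
of a `q`-linearized polynomial with `k` coefficients; `f` is `K`-linear. The relations
`∑ xⱼ cⱼ = 0` with `x ∈ Kⁿ` say that `f (∑ xⱼ gⱼ) = 0`, and distinct `x` give distinct roots
`∑ xⱼ gⱼ` because the `gⱼ` are independent. If `a ≠ 0` the polynomial has at most `q^(k-1)` roots,
so the space of relations has dimension at most `k - 1`, and by rank–nullity the rank weight of `c`
is at least `n - k + 1` (`le_rankWeight_gabidulinWord`).

For the converse, `k - 1` linear conditions on the `k` coefficients `aᵢ` have a nonzero solution, so
some `a ≠ 0` makes `c` vanish at `k - 1` coordinates; the other `n - k + 1` coordinates span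
(`exists_rankWeight_gabidulinWord_le`).
-/

open Polynomial

/-- The `k × n` Moore matrix of `v₁, …, v_n`: its `(i,j)` entry is `vⱼ^(q^i)`
(rows indexed by `i = 0, …, k-1`). -/
def Moore {L : Type*} [Field L] (q : ℕ) {k n : ℕ} (v : Fin n → L) :
    Matrix (Fin k) (Fin n) L :=
  Matrix.of fun i j => v j ^ q ^ (i : ℕ)

/-- The rank weight of `c ∈ L^n`: the `K`-dimension of the `K`-span of its coordinates. -/
noncomputable def rankWeight (K : Type*) {L : Type*} [Field K] [Field L] [Algebra K L]
    {n : ℕ} (c : Fin n → L) : ℕ :=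
  Module.finrank K (Submodule.span K (Set.range c))

/-- The `q`-linearized polynomial `∑ᵢ aᵢ X^(q^i)`. -/
noncomputable def linPoly {L : Type*} [Field L] (q : ℕ) {k : ℕ} (a : Fin k → L) : L[X] :=
  ∑ i, C (a i) * X ^ q ^ (i : ℕ)

/-- The codeword with message `a`: the combination of the rows of the Moore matrix with
coefficients `a`, i.e. the linearized polynomial of `a` evaluated at the points `g j`. -/
noncomputable def gabidulinWord {L : Type*} [Field L] (q : ℕ) {k n : ℕ} (g : Fin n → L)
    (a : Fin k → L) : Fin n → L :=
  fun j => (linPoly q a).eval (g j)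

lemma eval_linPoly {L : Type*} [Field L] (q : ℕ) {k : ℕ} (a : Fin k → L) (x : L) :
    (linPoly q a).eval x = ∑ i, a i * x ^ q ^ (i : ℕ) := by
  simp [linPoly, eval_finsetSum]

lemma natDegree_linPoly_le {L : Type*} [Field L] {q : ℕ} (hq : 1 < q) {k : ℕ} (a : Fin k → L) :
    (linPoly q a).natDegree ≤ q ^ (k - 1) := by
  refine natDegree_sum_le_of_forall_le _ _ fun i _ => (natDegree_C_mul_X_pow_le _ _).trans ?_
  exact Nat.pow_le_pow_right hq.le (by omega)

lemma linPoly_ne_zero {L : Type*} [Field L] {q : ℕ} (hq : 1 < q) {k : ℕ} {a : Fin k → L}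
    (ha : a ≠ 0) : linPoly q a ≠ 0 := by
  obtain ⟨i, hi⟩ := Function.ne_iff.1 ha
  intro h
  apply hi
  have h1 := congrArg (fun p => p.coeff (q ^ (i : ℕ))) h
  simpa [linPoly, finsetSum_coeff, coeff_X_pow, (Nat.pow_right_injective hq).eq_iff,
    Fin.val_inj] using h1

/-- The evaluation of a `q`-linearized polynomial is `K`-linear, as the powers of the Frobenius
are. -/
lemma eval_linPoly_sum_smul {K L : Type*} [Field K] [Field L] [Algebra K L] [Fintype K]
    {k n : ℕ} (a : Fin k → L) (g : Fin n → L) (x : Fin n → K) :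
    (linPoly (Fintype.card K) a).eval (∑ j, x j • g j) =
      ∑ j, x j • gabidulinWord (Fintype.card K) g a j := by
  have hfrob (i : ℕ) : (∑ j, x j • g j) ^ Fintype.card K ^ i =
      ∑ j, x j • g j ^ Fintype.card K ^ i := by
    have h (y : L) : (FiniteField.frobeniusAlgHom K L ^ i) y = y ^ Fintype.card K ^ i := by
      rw [AlgHom.coe_pow, FiniteField.coe_frobeniusAlgHom, pow_iterate]
    simp only [← h, map_sum, map_smul]
  simp only [gabidulinWord, eval_linPoly, hfrob, Finset.mul_sum, Finset.smul_sum, mul_smul_comm]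
  exact Finset.sum_comm

/-- The `K`-linear relations among the coordinates of a word with nonzero message inject into the
roots of its linearized polynomial, so they form a space of dimension at most `k - 1`. -/
lemma le_rankWeight_gabidulinWord {K L : Type*} [Field K] [Field L] [Algebra K L] [Fintype K]
    {n k : ℕ} (hk1 : 1 ≤ k) (hkn : k ≤ n) {g : Fin n → L} (hg : LinearIndependent K g)
    {a : Fin k → L} (ha : a ≠ 0) :
    n - k + 1 ≤ rankWeight K (gabidulinWord (Fintype.card K) g a) := by
  classical
  set q := Fintype.card K
  have hq : 1 < q := Fintype.one_lt_card
  set Φ := Fintype.linearCombination K (gabidulinWord q g a) with hΦ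
  have hrn := Φ.finrank_range_add_finrank_ker
  rw [hΦ, Fintype.range_linearCombination, ← hΦ, Module.finrank_fin_fun] at hrn
  have hroot (x : LinearMap.ker Φ) :
      ∑ j, x.1 j • g j ∈ (linPoly q a).roots.toFinset := by
    rw [Multiset.mem_toFinset, mem_roots (linPoly_ne_zero hq ha), IsRoot.def,
      eval_linPoly_sum_smul]
    exact LinearMap.mem_ker.1 x.2
  have hinj : Function.Injective
      (fun x : LinearMap.ker Φ => (⟨_, hroot x⟩ : (linPoly q a).roots.toFinset)) := by
    intro x y hxy
    exact Subtype.ext (hg.fintypeLinearCombination_injective (by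
      simpa [Fintype.linearCombination_apply] using hxy))
  have hcard : Nat.card (LinearMap.ker Φ) ≤ q ^ (k - 1) := by
    refine (Nat.card_le_card_of_injective _ hinj).trans ?_
    rw [Nat.card_eq_fintype_card, Fintype.card_coe]
    exact (Multiset.toFinset_card_le _).trans
      ((card_roots' _).trans (natDegree_linPoly_le hq a))
  rw [Module.natCard_eq_pow_finrank (K := K), Nat.card_eq_fintype_card] at hcard
  have := (Nat.pow_le_pow_iff_right hq).1 hcard
  unfold rankWeight
  omega

/-- A nonzero message can be chosen so that the word vanishes at the first `k - 1` coordinates. -/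
lemma exists_rankWeight_gabidulinWord_le (K : Type*) {L : Type*} [Field K] [Field L] [Algebra K L]
    (q : ℕ) {n k : ℕ} (hk1 : 1 ≤ k) (hkn : k ≤ n) (g : Fin n → L) :
    ∃ a : Fin k → L, a ≠ 0 ∧ rankWeight K (gabidulinWord q g a) ≤ n - k + 1 := by
  classical
  let A : Matrix (Fin (k - 1)) (Fin k) L :=
    Matrix.of fun j i => g (Fin.castLE (by omega) j) ^ q ^ (i : ℕ)
  have hker : LinearMap.ker A.mulVecLin ≠ ⊥ :=
    LinearMap.ker_ne_bot_of_finrank_lt (by simp only [Module.finrank_fin_fun]; omega)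
  obtain ⟨a, ha, ha0⟩ := Submodule.exists_mem_ne_zero_of_ne_bot hker
  refine ⟨a, ha0, ?_⟩
  have hvan (j : Fin n) (hj : (j : ℕ) < k - 1) : gabidulinWord q g a j = 0 := by
    have := congrFun (LinearMap.mem_ker.1 ha) ⟨j, hj⟩
    simpa [A, Matrix.mulVec, dotProduct, gabidulinWord, eval_linPoly, mul_comm] using this
  -- The last `n - k + 1` coordinates, indexed by `Fin (n - k + 1)`, span.
  let s : Fin (n - k + 1) → L :=
    fun t => gabidulinWord q g a ⟨(k - 1) + t, by omega⟩
  have hle : Submodule.span K (Set.range (gabidulinWord q g a)) ≤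
      Submodule.span K (Set.range s) := by
    rw [Submodule.span_le]
    rintro _ ⟨j, rfl⟩
    by_cases hj : (j : ℕ) < k - 1
    · rw [hvan j hj]
      exact Submodule.zero_mem _
    · refine Submodule.subset_span ⟨⟨j - (k - 1), by omega⟩, ?_⟩
      exact congrArg (gabidulinWord q g a) (Fin.ext (Nat.add_sub_of_le (not_lt.1 hj)))
  have : FiniteDimensional K (Submodule.span K (Set.range s)) :=
    FiniteDimensional.span_of_finite K (Set.finite_range s)
  exact (Submodule.finrank_mono hle).trans ((finrank_range_le_card s).trans (Fintype.card_fin _).le)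

/-- Let `g₁, …, g_n ∈ 𝔽_{q^m}` be linearly independent over `𝔽_q`
(`m ≥ n`), `1 ≤ k ≤ n`, and let `C ⊆ 𝔽_{q^m}^n` be the Gabidulin code generated by the
Moore matrix `M_k(g₁, …, g_n)`. Then the minimum rank distance of `C` equals `n − k + 1`:
every nonzero codeword has rank weight at least `n − k + 1`, and some nonzero codeword
attains this value. -/
theorem stmt16 (K L : Type*) [Field K] [Field L] [Algebra K L] [Fintype K] [Fintype L]
    (q m : ℕ) (hq : q = Fintype.card K) (hm : Fintype.card L = q ^ m)
    (n k : ℕ) (hmn : n ≤ m) (hk1 : 1 ≤ k) (hkn : k ≤ n)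
    (g : Fin n → L) (hg : LinearIndependent K g)
    (C : Submodule L (Fin n → L))
    (hC : C = Submodule.span L (Set.range fun i => (Moore q g : Matrix (Fin k) (Fin n) L) i)) :
    (∀ c ∈ C, c ≠ 0 → n - k + 1 ≤ rankWeight K c) ∧
      ∃ c ∈ C, c ≠ 0 ∧ rankWeight K c = n - k + 1 := by
  subst hq hC
  have hword (a : Fin k → L) :
      ∑ i, a i • (Moore (Fintype.card K) g : Matrix (Fin k) (Fin n) L) i =
        gabidulinWord (Fintype.card K) g a := by
    ext j
    simp [Moore, gabidulinWord, eval_linPoly]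
  constructor
  · intro c hc hc0
    obtain ⟨a, rfl⟩ := (Submodule.mem_span_range_iff_exists_fun L).1 hc
    rw [hword]
    refine le_rankWeight_gabidulinWord hk1 hkn hg ?_
    rintro rfl
    exact hc0 (by simp)
  · obtain ⟨a, ha, hle⟩ := exists_rankWeight_gabidulinWord_le K (Fintype.card K) hk1 hkn g
    have hge := le_rankWeight_gabidulinWord hk1 hkn hg ha
    refine ⟨gabidulinWord (Fintype.card K) g a,
      (Submodule.mem_span_range_iff_exists_fun L).2 ⟨a, hword a⟩, ?_, le_antisymm hle hge⟩
    -- The zero word has rank weight `0`, contradicting `hge`.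
    intro h0
    rw [h0] at hge
    have hz : Submodule.span K (Set.range (0 : Fin n → L)) = ⊥ := by
      rw [Submodule.span_eq_bot]
      rintro _ ⟨j, rfl⟩
      rfl
    rw [rankWeight, hz, finrank_bot] at hge
    omega
end
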